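/- (Soundness) For all sets of formulas Φ ∪ {ψ} ⊆ L_⟹: if Φ ⊢ ψ in the Hilbert system for InqML_⟹, then Φ ⊨ ψ (every information state of every in-model that supports all formulas in Φ supports ψ). -/

import Mathlib

/-- Formulas of the inquisitive modal language `L_⟹`. -/
inductive Form (P : Type) : Type
  | atom : P → Form P
  | bot : Form P
  | and : Form P → Form P → Form P
  | impl : Form P → Form P → Form P
  | idisj : Form P → Form P → Form P
  | yields : Form P → Form P → Form P

/-- An inhabited neighborhood model (in-model). -/
structure InModel (P : Type) where
  W : Type
  ne : Nonempty W
  Nb : W → Set (Set W)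
  nb_nonempty : ∀ w, ∀ s ∈ Nb w, s.Nonempty
  V : W → P → Bool

/-- Support of a formula at an information state. -/
def support {P : Type} (M : InModel P) : Form P → Set M.W → Prop
  | .atom p, s => ∀ w ∈ s, M.V w p = true
  | .bot, s => s = ∅
  | .and φ ψ, s => support M φ s ∧ support M ψ s
  | .impl φ ψ, s => ∀ t : Set M.W, t ⊆ s → support M φ t → support M ψ t
  | .idisj φ ψ, s => support M φ s ∨ support M ψ s
  | .yields φ ψ, s => ∀ w ∈ s, ∀ t ∈ M.Nb w, support M φ t → support M ψ t

/-- Truth at a world: support at the corresponding singleton state. -/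
def truth {P : Type} (M : InModel P) (w : M.W) (φ : Form P) : Prop :=
  support M φ {w}

/-- A formula is truth-conditional if support at any state amounts to truth at
every world of the state. -/
def TruthConditional {P : Type} (φ : Form P) : Prop :=
  ∀ (M : InModel P) (s : Set M.W), support M φ s ↔ ∀ w ∈ s, truth M w φ

/-- Logical equivalence: same supporting states in every in-model. -/
def EquivF {P : Type} (φ ψ : Form P) : Prop :=
  ∀ (M : InModel P) (s : Set M.W), support M φ s ↔ support M ψ s

def Form.neg {P : Type} (φ : Form P) : Form P := .impl φ .bot
def Form.top {P : Type} : Form P := Form.neg .bot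
def Form.or {P : Type} (φ ψ : Form P) : Form P := Form.neg (.and (Form.neg φ) (Form.neg ψ))
def Form.box {P : Type} (φ : Form P) : Form P := .yields Form.top φ
def Form.dia {P : Type} (φ : Form P) : Form P := Form.neg (.yields φ .bot)
def Form.quest {P : Type} (φ : Form P) : Form P := .idisj φ (Form.neg φ)

/-- Declaratives: formulas where `⩔` occurs only within the scope of `⟹`. -/
inductive IsDecl {P : Type} : Form P → Prop
  | atom (p : P) : IsDecl (.atom p)
  | bot : IsDecl .bot
  | and {α β : Form P} : IsDecl α → IsDecl β → IsDecl (.and α β)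
  | impl {α β : Form P} : IsDecl α → IsDecl β → IsDecl (.impl α β)
  | yields (φ ψ : Form P) : IsDecl (.yields φ ψ)

/-- Derivability in the Hilbert system for `InqML_⟹`: a standard axiomatization
of intuitionistic propositional logic (with `⩔` as intuitionistic disjunction),
the inquisitive axioms `DDN` and `Split` for declaratives, the modal axioms
`Trans`, `RConj`, `LDisj`, and the rules of modus ponens and conditional
necessitation. -/
inductive Deriv {P : Type} : Form P → Prop
  -- intuitionistic propositional axioms
  | ax_k {φ ψ : Form P} : Deriv (.impl φ (.impl ψ φ))
  | ax_s {φ ψ χ : Form P} :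
      Deriv (.impl (.impl φ (.impl ψ χ)) (.impl (.impl φ ψ) (.impl φ χ)))
  | and_intro {φ ψ : Form P} : Deriv (.impl φ (.impl ψ (.and φ ψ)))
  | and_elim_left {φ ψ : Form P} : Deriv (.impl (.and φ ψ) φ)
  | and_elim_right {φ ψ : Form P} : Deriv (.impl (.and φ ψ) ψ)
  | idisj_intro_left {φ ψ : Form P} : Deriv (.impl φ (.idisj φ ψ))
  | idisj_intro_right {φ ψ : Form P} : Deriv (.impl ψ (.idisj φ ψ))
  | idisj_elim {φ ψ χ : Form P} :
      Deriv (.impl (.impl φ χ) (.impl (.impl ψ χ) (.impl (.idisj φ ψ) χ)))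
  | exfalso {φ : Form P} : Deriv (.impl .bot φ)
  -- inquisitive axioms for declaratives
  | ddn {α : Form P} : IsDecl α → Deriv (.impl (Form.neg (Form.neg α)) α)
  | split {α φ ψ : Form P} : IsDecl α →
      Deriv (.impl (.impl α (.idisj φ ψ)) (.idisj (.impl α φ) (.impl α ψ)))
  -- modal axioms
  | trans {φ ψ χ : Form P} :
      Deriv (.impl (.and (.yields φ ψ) (.yields ψ χ)) (.yields φ χ))
  | rconj {φ ψ χ : Form P} :
      Deriv (.impl (.and (.yields φ ψ) (.yields φ χ)) (.yields φ (.and ψ χ)))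
  | ldisj {φ ψ χ : Form P} :
      Deriv (.impl (.and (.yields φ χ) (.yields ψ χ)) (.yields (.idisj φ ψ) χ))
  -- rules
  | mp {φ ψ : Form P} : Deriv (.impl φ ψ) → Deriv φ → Deriv ψ
  | cn {φ ψ : Form P} : Deriv (.impl φ ψ) → Deriv (.yields φ ψ)

def bigAnd {P : Type} : List (Form P) → Form P
  | [] => Form.top
  | [φ] => φ
  | φ :: rest => .and φ (bigAnd rest)

/-- `Φ ⊢ ψ`: for some `φ₁, …, φₙ ∈ Φ` (possibly `n = 0`, with `⊤` as
antecedent), the formula `(φ₁ ∧ … ∧ φₙ) → ψ` is derivable. -/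
def SDeriv {P : Type} (Φ : Set (Form P)) (ψ : Form P) : Prop :=
  ∃ l : List (Form P), (∀ φ ∈ l, φ ∈ Φ) ∧ Deriv (.impl (bigAnd l) ψ)

/-- `Φ ⊨ ψ`: every information state of every in-model supporting all formulas
of `Φ` supports `ψ`. -/
def Entails {P : Type} (Φ : Set (Form P)) (ψ : Form P) : Prop :=
  ∀ (M : InModel P) (s : Set M.W), (∀ φ ∈ Φ, support M φ s) → support M ψ s

theorem support_mono {P : Type} (M : InModel P) (φ : Form P) :
    ∀ s t : Set M.W, t ⊆ s → support M φ s → support M φ t := by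
  induction φ with
  | atom p => exact fun s t h hs w hw => hs w (h hw)
  | bot => exact fun s t h hs => Set.subset_eq_empty h hs
  | and φ ψ ih1 ih2 => exact fun s t h hs => ⟨ih1 s t h hs.1, ih2 s t h hs.2⟩
  | impl φ ψ ih1 ih2 => exact fun s t h hs u hu => hs u (hu.trans h)
  | idisj φ ψ ih1 ih2 => exact fun s t h hs => hs.imp (ih1 s t h) (ih2 s t h)
  | yields φ ψ ih1 ih2 => exact fun s t h hs w hw => hs w (h hw)

theorem support_empty {P : Type} (M : InModel P) (φ : Form P) : support M φ ∅ := by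
  induction φ with
  | atom p => exact fun w hw => hw.elim
  | bot => exact rfl
  | and φ ψ ih1 ih2 => exact ⟨ih1, ih2⟩
  | impl φ ψ ih1 ih2 =>
    intro t ht _
    rw [Set.subset_empty_iff.mp ht]
    exact ih2
  | idisj φ ψ ih1 ih2 => exact Or.inl ih1
  | yields φ ψ ih1 ih2 => exact fun w hw => hw.elim

theorem support_of_truth {P : Type} (M : InModel P) {α : Form P} (hα : IsDecl α) :
    ∀ s : Set M.W, (∀ w ∈ s, support M α {w}) → support M α s := by
  induction hα with
  | atom p => exact fun s h w hw => h w hw w rfl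
  | bot =>
    intro s h
    exact Set.eq_empty_iff_forall_notMem.mpr fun w hw => Set.singleton_ne_empty w (h w hw)
  | and _ _ ih1 ih2 =>
    exact fun s h => ⟨ih1 s fun w hw => (h w hw).1, ih2 s fun w hw => (h w hw).2⟩
  | impl _ _ ih1 ih2 =>
    intro s h t ht hs
    refine ih2 t fun w hw => h w (ht hw) {w} subset_rfl ?_
    exact support_mono M _ t {w} (Set.singleton_subset_iff.mpr hw) hs
  | yields φ ψ => exact fun s h w hw => h w hw w rfl

theorem deriv_sound {P : Type} {φ : Form P} (h : Deriv φ) (M : InModel P) :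
    ∀ s : Set M.W, support M φ s := by
  induction h with
  | ax_k => exact fun s t _ h u hu _ => support_mono M _ t u hu h
  | ax_s =>
    exact fun s t _ h u hu h' v hv h'' =>
      h v (hv.trans hu) h'' v subset_rfl (h' v hv h'')
  | and_intro => exact fun s t _ h u hu h' => ⟨support_mono M _ t u hu h, h'⟩
  | and_elim_left => exact fun s t _ h => h.1
  | and_elim_right => exact fun s t _ h => h.2
  | idisj_intro_left => exact fun s t _ h => Or.inl h
  | idisj_intro_right => exact fun s t _ h => Or.inr h
  | idisj_elim =>
    exact fun s t _ h u hu h' v hv h'' =>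
      h''.elim (h v (hv.trans hu)) (h' v hv)
  | exfalso =>
    intro s t _ h
    have h' : t = ∅ := h
    rw [h']
    exact support_empty M _
  | @ddn α hα =>
    intro s t _ h
    refine support_of_truth M hα t fun w hw => ?_
    by_contra hn
    refine Set.singleton_ne_empty w (h {w} (Set.singleton_subset_iff.mpr hw) ?_)
    intro u hu hs
    rcases Set.subset_singleton_iff_eq.mp hu with h0 | h1
    · exact h0
    · rw [h1] at hs
      exact (hn hs).elim
  | @split α φ ψ hα =>
    intro s t _ h
    have key : support M α {w | w ∈ t ∧ support M α {w}} :=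
      support_of_truth M hα _ fun w hw => hw.2
    have sub : ∀ u : Set M.W, u ⊆ t → support M α u →
        u ⊆ {w | w ∈ t ∧ support M α {w}} := fun u hu hs w hw =>
      ⟨hu hw, support_mono M α u {w} (Set.singleton_subset_iff.mpr hw) hs⟩
    rcases h _ (fun w hw => hw.1) key with h1 | h1
    · exact Or.inl fun u hu hs => support_mono M φ _ u (sub u hu hs) h1
    · exact Or.inr fun u hu hs => support_mono M ψ _ u (sub u hu hs) h1
  | trans => exact fun s t _ h w hw u hu h' => h.2 w hw u hu (h.1 w hw u hu h')
  | rconj => exact fun s t _ h w hw u hu h' => ⟨h.1 w hw u hu h', h.2 w hw u hu h'⟩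
  | ldisj => exact fun s t _ h w hw u hu h' => h'.elim (h.1 w hw u hu) (h.2 w hw u hu)
  | mp _ _ ih1 ih2 => exact fun s => ih1 s s subset_rfl (ih2 s)
  | cn _ ih => exact fun s w _ t _ h => ih t t subset_rfl h

theorem support_bigAnd {P : Type} (M : InModel P) (s : Set M.W) :
    ∀ l : List (Form P), (∀ φ ∈ l, support M φ s) → support M (bigAnd l) s
  | [], _ => fun _ _ h => h
  | [φ], h => h φ (by simp)
  | φ :: χ :: rest, h =>
    ⟨h φ (by simp), support_bigAnd M s (χ :: rest) fun x hx => h x (List.mem_cons_of_mem _ hx)⟩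

/-- soundness of the Hilbert system for `InqML_⟹`. -/
theorem soundness {P : Type} (Φ : Set (Form P)) (ψ : Form P) :
    SDeriv Φ ψ → Entails Φ ψ := by
  rintro ⟨l, hl, hd⟩ M s hs
  exact deriv_sound hd M s s subset_rfl (support_bigAnd M s l fun φ hφ => hs φ (hl φ hφ))
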